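/- For every caterpillar A=(V,E_A) and every spanning cycle C=(V,E_C) on a common set V of n ≥ 3 vertices, there exists a RacSim drawing of A and C on an integer grid of size (2n−1)×2n in which every edge of both graphs is drawn with at most one bend. -/

import Mathlib

open SimpleGraph

/-- A polyline with `n` straight-line segments, given by its `n + 1` corner points. -/
structure Polyline where
  n : ℕ
  pts : Fin (n + 1) → ℝ × ℝ

namespace Polyline

/-- The first point of a polyline. -/
def first (P : Polyline) : ℝ × ℝ := P.pts 0

/-- The last point of a polyline. -/
def last (P : Polyline) : ℝ × ℝ := P.pts (Fin.last P.n)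

/-- The segments of a polyline, as ordered pairs of endpoints. -/
def segs (P : Polyline) : Set ((ℝ × ℝ) × (ℝ × ℝ)) :=
  {s | ∃ i : Fin P.n, s = (P.pts i.castSucc, P.pts i.succ)}

/-- The set of points covered by a polyline. -/
def curve (P : Polyline) : Set (ℝ × ℝ) :=
  ⋃ i : Fin P.n, segment ℝ (P.pts i.castSucc) (P.pts i.succ)

end Polyline

/-- Two segments are perpendicular: their direction vectors have zero dot product. -/
def SegPerp (s t : (ℝ × ℝ) × (ℝ × ℝ)) : Prop :=
  (s.2.1 - s.1.1) * (t.2.1 - t.1.1) + (s.2.2 - s.1.2) * (t.2.2 - t.1.2) = 0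

/-- Two segments cross: their relative interiors meet. -/
def SegCross (s t : (ℝ × ℝ) × (ℝ × ℝ)) : Prop :=
  (openSegment ℝ s.1 s.2 ∩ openSegment ℝ t.1 t.2).Nonempty

/-- A point has integer coordinates lying in `{1, …, a} × {1, …, b}`. -/
def OnGridPt (a b : ℤ) (p : ℝ × ℝ) : Prop :=
  ∃ x y : ℤ, p = ((x : ℝ), (y : ℝ)) ∧ 1 ≤ x ∧ x ≤ a ∧ 1 ≤ y ∧ y ≤ b

/-- A simultaneous polyline drawing of the graphs `G 0, …, G (m - 1)` on a common
vertex set `V`: an injective placement of the vertices in the plane together with,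
for each graph and each of its edges, a polyline joining the placements of the two
endpoints of the edge. -/
structure SimDrawing {V : Type} {m : ℕ} (G : Fin m → SimpleGraph V) where
  pos : V → ℝ × ℝ
  pos_injective : Function.Injective pos
  poly : Fin m → Sym2 V → Polyline
  joins : ∀ (i : Fin m) (a b : V), (G i).Adj a b →
    ((poly i s(a, b)).first = pos a ∧ (poly i s(a, b)).last = pos b) ∨
    ((poly i s(a, b)).first = pos b ∧ (poly i s(a, b)).last = pos a)

namespace SimDrawing

variable {V : Type} {m : ℕ} {G : Fin m → SimpleGraph V} (D : SimDrawing G)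

/-- (i) Each graph is drawn planar: the polylines of two distinct edges of the same
graph intersect only in points representing common endpoints. -/
def PlanarEach : Prop :=
  ∀ i : Fin m, ∀ e ∈ (G i).edgeSet, ∀ e' ∈ (G i).edgeSet, e ≠ e' →
    (D.poly i e).curve ∩ (D.poly i e').curve ⊆
      {p | ∃ v : V, v ∈ e ∧ v ∈ e' ∧ p = D.pos v}

/-- (ii) No two segments belonging to distinct edges overlap in more than one point. -/
def NoOverlaps : Prop :=
  ∀ i : Fin m, ∀ e ∈ (G i).edgeSet, ∀ j : Fin m, ∀ e' ∈ (G j).edgeSet,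
    (i ≠ j ∨ e ≠ e') →
      ∀ s ∈ (D.poly i e).segs, ∀ t ∈ (D.poly j e').segs,
        (segment ℝ s.1 s.2 ∩ segment ℝ t.1 t.2).Subsingleton

/-- (iii) Whenever segments of edges of two different graphs cross, they are
perpendicular at the crossing point. -/
def RightAngleCrossings : Prop :=
  ∀ i j : Fin m, i ≠ j → ∀ e ∈ (G i).edgeSet, ∀ e' ∈ (G j).edgeSet,
    ∀ s ∈ (D.poly i e).segs, ∀ t ∈ (D.poly j e').segs, SegCross s t → SegPerp s t

/-- A RacSim (RAC simultaneous) drawing: conditions (i), (ii) and (iii). -/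
def IsRacSim : Prop :=
  D.PlanarEach ∧ D.NoOverlaps ∧ D.RightAngleCrossings

/-- All vertex points and all corner points (hence all segment endpoints) of the
drawing lie on the integer grid `{1, …, a} × {1, …, b}`. -/
def OnGrid (a b : ℤ) : Prop :=
  (∀ v : V, OnGridPt a b (D.pos v)) ∧
    ∀ i : Fin m, ∀ e ∈ (G i).edgeSet, ∀ k : Fin ((D.poly i e).n + 1),
      OnGridPt a b ((D.poly i e).pts k)

/-- Every edge of the `i`-th graph is drawn with at most `k` bends, i.e. its
polyline consists of at most `k + 1` segments. -/
def BendsAtMost (i : Fin m) (k : ℕ) : Prop :=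
  ∀ e ∈ (G i).edgeSet, (D.poly i e).n ≤ k + 1

end SimDrawing

/-- The degree of a vertex of a graph. -/
noncomputable def vdeg {V : Type} (G : SimpleGraph V) (v : V) : ℕ := (G.neighborSet v).ncard

/-- A graph is a (possibly empty) path: either it has no vertices, or it is
connected, has maximum degree at most 2, and has a vertex of degree at most 1
(which rules out cycles). -/
def IsPathOrEmptyGraph {W : Type} (H : SimpleGraph W) : Prop :=
  IsEmpty W ∨ (H.Connected ∧ (∀ v : W, vdeg H v ≤ 2) ∧ ∃ v : W, vdeg H v ≤ 1)

/-- A caterpillar: a tree in which deleting all leaves (vertices of degree 1)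
yields a (possibly empty) path. -/
def IsCaterpillar {V : Type} (G : SimpleGraph V) : Prop :=
  G.IsTree ∧ IsPathOrEmptyGraph (G.induce {v : V | vdeg G v ≠ 1})

/-- A spanning cycle on a vertex set: a connected graph in which every vertex has
degree exactly 2 (a Hamiltonian cycle on the vertex set). -/
def IsSpanningCycle {V : Type} (G : SimpleGraph V) : Prop :=
  G.Connected ∧ ∀ v : V, vdeg G v = 2

/-!
Put the vertices on the odd grid lines. The columns follow the cycle, starting at a root chosen as a
leaf next to one end of the path of inner vertices of the caterpillar. The rows follow the spine,
i.e. the root and the inner vertices, upwards: each spine vertex lies directly above its *special*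
child, the leaf attached to it whose column is the next one, if there is such a leaf, and is
followed by its other leaves and then by the next spine vertex.

A tree edge to a special child is straight with slope `-1`. Every other tree edge climbs steeply
from the parent, moving by one unit to the side of the child, and then runs horizontally. A cycle
edge runs vertically in the column of its first vertex and then reaches the next vertex by a short
segment of slope `-1/2`; the closing edge ends along the bottom row, which contains only the root.
The order of the rows ensures that the slanted parts of cycle edges meet tree edges in vertices
only, so the only crossings are those of vertical parts of cycle edges with horizontal parts of tree
edges.
-/

/-! ### Segments and polylines with one bend -/

theorem exists_coords_of_mem_segment {a b z : ℝ × ℝ} (hz : z ∈ segment ℝ a b) :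
    ∃ t : ℝ, 0 ≤ t ∧ t ≤ 1 ∧
      z.1 = a.1 + t * (b.1 - a.1) ∧ z.2 = a.2 + t * (b.2 - a.2) := by
  rw [segment_eq_image'] at hz
  obtain ⟨t, ⟨ht0, ht1⟩, rfl⟩ := hz
  exact ⟨t, ht0, ht1, rfl, rfl⟩

namespace Polyline

/-- The polyline from `p` to `q` with the single bend `b`. A straight segment arises when `b` lies
between `p` and `q`. -/
def oneBend (p b q : ℝ × ℝ) : Polyline := ⟨2, ![p, b, q]⟩

variable {p b q : ℝ × ℝ}

theorem mem_segs_oneBend {s : (ℝ × ℝ) × (ℝ × ℝ)} :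
    s ∈ (oneBend p b q).segs ↔ s = (p, b) ∨ s = (b, q) :=
  Fin.exists_fin_two

theorem mem_curve_oneBend {z : ℝ × ℝ} :
    z ∈ (oneBend p b q).curve ↔ z ∈ segment ℝ p b ∨ z ∈ segment ℝ b q :=
  Set.mem_iUnion.trans Fin.exists_fin_two

theorem forall_pts_oneBend {P : ℝ × ℝ → Prop} (hp : P p) (hb : P b) (hq : P q) :
    ∀ k, P ((oneBend p b q).pts k) := by
  intro k
  fin_cases k
  exacts [hp, hb, hq]

theorem segment_subset_curve {P : Polyline} {s : (ℝ × ℝ) × (ℝ × ℝ)} (hs : s ∈ P.segs) :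
    segment ℝ s.1 s.2 ⊆ P.curve := by
  obtain ⟨i, rfl⟩ := hs
  exact Set.subset_iUnion (fun i : Fin P.n => segment ℝ (P.pts i.castSucc) (P.pts i.succ)) i

end Polyline

/-- Two segments are compatible in a RAC drawing: they share at most one point, and if they cross,
they are perpendicular. -/
def MeetRAC (s t : (ℝ × ℝ) × (ℝ × ℝ)) : Prop :=
  (segment ℝ s.1 s.2 ∩ segment ℝ t.1 t.2).Subsingleton ∧ (SegCross s t → SegPerp s t)

namespace MeetRAC

variable {s t : (ℝ × ℝ) × (ℝ × ℝ)}

theorem symm (h : MeetRAC s t) : MeetRAC t s := by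
  refine ⟨by rw [Set.inter_comm]; exact h.1, fun hcross => ?_⟩
  have hperp : SegPerp s t := h.2 (by rwa [SegCross, Set.inter_comm])
  simpa only [SegPerp, mul_comm] using hperp

theorem of_horizontal_of_vertical (hs : s.1.2 = s.2.2) (ht : t.1.1 = t.2.1) : MeetRAC s t := by
  refine ⟨?_, fun _ => by simp [SegPerp, hs, ht]⟩
  suffices common : ∀ z ∈ segment ℝ s.1 s.2 ∩ segment ℝ t.1 t.2, z = (t.1.1, s.1.2) from
    fun z hz w hw => (common z hz).trans (common w hw).symm
  rintro z ⟨hzs, hzt⟩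
  obtain ⟨a, -, -, -, hz2⟩ := exists_coords_of_mem_segment hzs
  obtain ⟨b, -, -, hz1, -⟩ := exists_coords_of_mem_segment hzt
  ext <;> simp [hz1, hz2, hs, ht]

theorem of_forall_eq {z : ℝ × ℝ}
    (common : ∀ w ∈ segment ℝ s.1 s.2, w ∈ segment ℝ t.1 t.2 → w = z)
    (hz : z ∉ openSegment ℝ s.1 s.2 ∨ z ∉ openSegment ℝ t.1 t.2) : MeetRAC s t := by
  refine ⟨fun w hw w' hw' => (common w hw.1 hw.2).trans (common w' hw'.1 hw'.2).symm, ?_⟩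
  rintro ⟨w, hws, hwt⟩
  obtain rfl := common w (openSegment_subset_segment ℝ _ _ hws)
    (openSegment_subset_segment ℝ _ _ hwt)
  exact (hz.elim (· hws) (· hwt)).elim

end MeetRAC

namespace SimDrawing

variable {V : Type} {m : ℕ} {G : Fin m → SimpleGraph V}

theorem PlanarEach.segment_inter_subsingleton {D : SimDrawing G} (hD : D.PlanarEach) {i : Fin m}
    {e e' : Sym2 V} (he : e ∈ (G i).edgeSet) (he' : e' ∈ (G i).edgeSet) (hne : e ≠ e')
    {s t : (ℝ × ℝ) × (ℝ × ℝ)} (hs : s ∈ (D.poly i e).segs) (ht : t ∈ (D.poly i e').segs) :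
    (segment ℝ s.1 s.2 ∩ segment ℝ t.1 t.2).Subsingleton := by
  have hsub := (Set.inter_subset_inter (Polyline.segment_subset_curve hs)
    (Polyline.segment_subset_curve ht)).trans (hD i e he e' he' hne)
  intro z hz w hw
  obtain ⟨u, hu, hu', rfl⟩ := hsub hz
  obtain ⟨v, hv, hv', rfl⟩ := hsub hw
  by_contra huv
  have huv : u ≠ v := fun h => huv (congrArg D.pos h)
  exact hne (((Sym2.mem_and_mem_iff huv).1 ⟨hu, hv⟩).trans
    ((Sym2.mem_and_mem_iff huv).1 ⟨hu', hv'⟩).symm)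

theorem PlanarEach.isRacSim {D : SimDrawing G} (hD : D.PlanarEach)
    (hrac : ∀ i j, i < j → ∀ e ∈ (G i).edgeSet, ∀ e' ∈ (G j).edgeSet,
      ∀ s ∈ (D.poly i e).segs, ∀ t ∈ (D.poly j e').segs, MeetRAC s t) :
    D.IsRacSim := by
  have hmeet : ∀ i j, i ≠ j → ∀ e ∈ (G i).edgeSet, ∀ e' ∈ (G j).edgeSet,
      ∀ s ∈ (D.poly i e).segs, ∀ t ∈ (D.poly j e').segs, MeetRAC s t := by
    intro i j hij e he e' he' s hs t ht
    rcases hij.lt_or_gt with hlt | hgt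
    · exact hrac i j hlt e he e' he' s hs t ht
    · exact (hrac j i hgt e' he' e he t ht s hs).symm
  refine ⟨hD, fun i e he j e' he' hne s hs t ht => ?_,
    fun i j hij e he e' he' s hs t ht => (hmeet i j hij e he e' he' s hs t ht).2⟩
  rcases eq_or_ne i j with rfl | hij
  · exact hD.segment_inter_subsingleton he he' (hne.resolve_left fun h => h rfl) hs ht
  · exact (hmeet i j hij e he e' he' s hs t ht).1

variable {pos : V → ℝ × ℝ} {Arc : Fin m → V → V → Prop} {bend : Fin m → V → V → ℝ × ℝ}

theorem exists_oneBend_of_arcs (hpos : pos.Injective)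
    (hcover : ∀ i a b, (G i).Adj a b → ∃ v w, Arc i v w ∧ s(a, b) = s(v, w)) :
    ∃ D : SimDrawing G, D.pos = pos ∧ ∀ i, ∀ e ∈ (G i).edgeSet, ∃ v w, Arc i v w ∧
      e = s(v, w) ∧ D.poly i e = .oneBend (pos v) (bend i v w) (pos w) := by
  have hpoly : ∀ i e, ∃ P : Polyline, e ∈ (G i).edgeSet → ∃ v w, Arc i v w ∧
      e = s(v, w) ∧ P = .oneBend (pos v) (bend i v w) (pos w) := by
    intro i e
    by_cases he : e ∈ (G i).edgeSet
    · induction e with | _ a b =>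
      obtain ⟨v, w, hvw, heq⟩ := hcover i a b he
      exact ⟨_, fun _ => ⟨v, w, hvw, heq, rfl⟩⟩
    · exact ⟨⟨0, 0⟩, fun h => absurd h he⟩
  choose poly hpoly using hpoly
  refine ⟨⟨pos, hpos, poly, fun i a b hab => ?_⟩, rfl, hpoly⟩
  obtain ⟨v, w, -, heq, hP⟩ := hpoly i s(a, b) hab
  rw [hP]
  rcases Sym2.eq_iff.1 heq with ⟨rfl, rfl⟩ | ⟨rfl, rfl⟩
  exacts [Or.inl ⟨rfl, rfl⟩, Or.inr ⟨rfl, rfl⟩]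

theorem exists_isRacSim_of_arcs {x y : ℤ} (hpos : pos.Injective)
    (hcover : ∀ i a b, (G i).Adj a b → ∃ v w, Arc i v w ∧ s(a, b) = s(v, w))
    (hplanar : ∀ i v w v' w', Arc i v w → Arc i v' w' → s(v, w) ≠ s(v', w') →
      ∀ z ∈ (Polyline.oneBend (pos v) (bend i v w) (pos w)).curve,
        z ∈ (Polyline.oneBend (pos v') (bend i v' w') (pos w')).curve →
          ∃ u, u ∈ s(v, w) ∧ u ∈ s(v', w') ∧ z = pos u)
    (hrac : ∀ i j, i < j → ∀ v w v' w', Arc i v w → Arc j v' w' →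
      ∀ s ∈ (Polyline.oneBend (pos v) (bend i v w) (pos w)).segs,
        ∀ t ∈ (Polyline.oneBend (pos v') (bend j v' w') (pos w')).segs, MeetRAC s t)
    (hgrid : ∀ v, OnGridPt x y (pos v))
    (hgrid_bend : ∀ i v w, Arc i v w → OnGridPt x y (bend i v w)) :
    ∃ D : SimDrawing G, D.IsRacSim ∧ D.OnGrid x y ∧ ∀ i, D.BendsAtMost i 1 := by
  obtain ⟨D, rfl, hD⟩ := exists_oneBend_of_arcs (bend := bend) hpos hcover
  refine ⟨D, PlanarEach.isRacSim ?_ ?_, ⟨hgrid, ?_⟩, ?_⟩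
  · rintro i e he e' he' hne z ⟨hz, hz'⟩
    obtain ⟨v, w, hvw, rfl, hP⟩ := hD i e he
    obtain ⟨v', w', hvw', rfl, hP'⟩ := hD i e' he'
    exact hplanar i v w v' w' hvw hvw' hne z (hP ▸ hz) (hP' ▸ hz')
  · intro i j hij e he e' he' s hs t ht
    obtain ⟨v, w, hvw, -, hP⟩ := hD i e he
    obtain ⟨v', w', hvw', -, hP'⟩ := hD j e' he'
    exact hrac i j hij v w v' w' hvw hvw' s (hP ▸ hs) t (hP' ▸ ht)
  · intro i e he
    obtain ⟨v, w, hvw, -, hP⟩ := hD i e he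
    rw [hP]
    exact Polyline.forall_pts_oneBend (hgrid v) (hgrid_bend i v w hvw) (hgrid w)
  · intro i e he
    obtain ⟨v, w, -, -, hP⟩ := hD i e he
    exact (congrArg Polyline.n hP).le

end SimDrawing

/-! ### Drawings of layouts -/

/-- The real coordinate of the `k`-th row or column of vertices. Vertices occupy the odd grid lines;
the even ones are left to the bends. -/
def lineCoord (k : ℕ) : ℝ := 2 * k + 1

theorem lineCoord_succ (k : ℕ) : lineCoord (k + 1) = lineCoord k + 2 := by
  simp only [lineCoord, Nat.cast_add, Nat.cast_one]
  ring

theorem lineCoord_lt_add_two_iff {k l : ℕ} : lineCoord k < lineCoord l + 2 ↔ k ≤ l := by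
  rw [← lineCoord_succ, ← Nat.lt_succ_iff, ← Nat.cast_lt (α := ℝ)]
  simp only [lineCoord]
  constructor <;> intro h <;> push_cast at h ⊢ <;> linarith

theorem lineCoord_add_two_le_iff {k l : ℕ} : lineCoord k + 2 ≤ lineCoord l ↔ k < l := by
  rw [← not_lt, lineCoord_lt_add_two_iff, not_le]

/-- The combinatorial data of the drawing on `n` columns and `n` rows: every vertex has a column and
a row, the tree is given by a root and parents, and the cycle visits the columns from left to right.
The *special* vertices are those drawn one row below and one column to the right of their parent. -/
structure RacLayout (V : Type) (n : ℕ) where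
  column : V → ℕ
  row : V → ℕ
  root : V
  parent : V → V
  IsSpecial : V → Prop
  column_lt : ∀ v, column v < n
  row_lt : ∀ v, row v < n
  column_injective : Function.Injective column
  row_injective : Function.Injective row
  column_root : column root = 0
  row_root : row root = 0
  root_not_special : ¬ IsSpecial root
  parent_not_special : ∀ d, d ≠ root → ¬ IsSpecial (parent d)
  column_of_special : ∀ d, IsSpecial d → column d = column (parent d) + 1
  row_parent_of_special : ∀ d, IsSpecial d → row (parent d) = row d + 1
  row_parent_lt : ∀ d, d ≠ root → ¬ IsSpecial d → row (parent d) < row d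
  parent_not_between : ∀ c d, c ≠ root → d ≠ root → ¬ IsSpecial d →
    row (parent d) < row (parent c) → row d ≤ row (parent c)
  next_not_between : ∀ w d, d ≠ root → ¬ IsSpecial d → column w = column (parent d) + 1 →
    row (parent d) < row w → row d ≤ row w

namespace RacLayout

variable {V : Type} {n : ℕ} (L : RacLayout V n) {u v w c d : V} {z : ℝ × ℝ}

/-- The abscissa of a vertex. -/
def x (v : V) : ℝ := lineCoord (L.column v)

/-- The ordinate of a vertex. -/
def y (v : V) : ℝ := lineCoord (L.row v)

/-- The position of a vertex. -/
def point (v : V) : ℝ × ℝ := (L.x v, L.y v)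

theorem x_add_two_le_iff : L.x u + 2 ≤ L.x v ↔ L.column u < L.column v :=
  lineCoord_add_two_le_iff

theorem y_add_two_le_iff : L.y u + 2 ≤ L.y v ↔ L.row u < L.row v :=
  lineCoord_add_two_le_iff

theorem y_lt_add_two_iff : L.y u < L.y v + 2 ↔ L.row u ≤ L.row v :=
  lineCoord_lt_add_two_iff

theorem eq_of_x_lt_x_add_two (huv : L.x u < L.x v + 2) (hvu : L.x v < L.x u + 2) : u = v :=
  L.column_injective
    (le_antisymm (lineCoord_lt_add_two_iff.1 huv) (lineCoord_lt_add_two_iff.1 hvu))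

theorem eq_of_y_lt_y_add_two (huv : L.y u < L.y v + 2) (hvu : L.y v < L.y u + 2) : u = v :=
  L.row_injective (le_antisymm (L.y_lt_add_two_iff.1 huv) (L.y_lt_add_two_iff.1 hvu))

theorem eq_point (hx : z.1 = L.x v) (hy : z.2 = L.y v) : z = L.point v :=
  Prod.ext hx hy

theorem point_injective : Function.Injective L.point := by
  intro u v huv
  have hx : L.x u = L.x v := congrArg Prod.fst huv
  exact L.eq_of_x_lt_x_add_two (by linarith) (by linarith)

theorem x_eq_of_column_eq_succ (h : L.column w = L.column v + 1) : L.x w = L.x v + 2 := by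
  rw [x, h, lineCoord_succ, x]

theorem y_root_le (v : V) : L.y L.root ≤ L.y v := by
  rw [y, y, L.row_root]
  simp [lineCoord]

theorem eq_root_of_y_le (h : L.y v ≤ L.y L.root) : v = L.root := by
  have := L.y_root_le v
  exact L.eq_of_y_lt_y_add_two (by linarith) (by linarith)

theorem x_of_special (hd : L.IsSpecial d) : L.x d = L.x (L.parent d) + 2 :=
  L.x_eq_of_column_eq_succ (L.column_of_special d hd)

theorem y_parent_of_special (hd : L.IsSpecial d) : L.y (L.parent d) = L.y d + 2 := by
  rw [y, L.row_parent_of_special d hd, lineCoord_succ, y]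

theorem y_parent_add_two_le (hd : d ≠ L.root) (hs : ¬ L.IsSpecial d) :
    L.y (L.parent d) + 2 ≤ L.y d :=
  L.y_add_two_le_iff.2 (L.row_parent_lt d hd hs)

theorem ne_root_of_special (hd : L.IsSpecial d) : d ≠ L.root := by
  rintro rfl
  exact L.root_not_special hd

theorem ne_parent (hd : d ≠ L.root) : d ≠ L.parent d := by
  intro h
  by_cases hs : L.IsSpecial d
  · have := L.column_of_special d hs
    rw [← h] at this
    omega
  · have := L.row_parent_lt d hd hs
    rw [← h] at this
    omega

open Classical in
/-- The bend of the tree edge from `parent d` to `d`. If `d` is special the edge is straight;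
otherwise it leaves the parent steeply towards the side of `d` and then runs along the row of
`d`. -/
noncomputable def treeBend (d : V) : ℝ × ℝ :=
  if L.IsSpecial d then (L.x (L.parent d) + 1, L.y d + 1)
  else if L.column (L.parent d) < L.column d then (L.x (L.parent d) + 1, L.y d)
  else (L.x (L.parent d) - 1, L.y d)

/-- The drawing of the tree edge from `parent d` to `d`. -/
noncomputable def treeEdge (d : V) : Polyline :=
  .oneBend (L.point (L.parent d)) (L.treeBend d) (L.point d)

/-- The cycle edges, directed from left to right except for the edge from the last column back to
the root. -/
def IsCycleArc (v w : V) : Prop :=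
  L.column w = L.column v + 1 ∨ L.column v + 1 = n ∧ w = L.root

/-- The bend of the cycle edge from `v` to `w`. Every cycle edge leaves `v` vertically. It then
descends with slope `-1/2` to `w` in the next column, except that the edge back to the root runs
along the bottom row. -/
noncomputable def cycleBend (v w : V) : ℝ × ℝ :=
  if L.column w = L.column v + 1 then (L.x v, L.y w + 1) else (L.x v, L.y w)

/-- The drawing of the cycle edge from `v` to `w`. -/
noncomputable def cycleEdge (v w : V) : Polyline :=
  .oneBend (L.point v) (L.cycleBend v w) (L.point w)

theorem treeBend_of_special (hd : L.IsSpecial d) :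
    L.treeBend d = (L.x (L.parent d) + 1, L.y d + 1) :=
  if_pos hd

theorem exists_treeBend_eq_of_not_special (hd : d ≠ L.root) (hs : ¬ L.IsSpecial d) :
    ∃ ε : ℝ, (ε = 1 ∨ ε = -1) ∧ 2 ≤ ε * (L.x d - L.x (L.parent d)) ∧
      L.treeBend d = (L.x (L.parent d) + ε, L.y d) := by
  rcases lt_or_ge (L.column (L.parent d)) (L.column d) with hlt | hge
  · have := L.x_add_two_le_iff.2 hlt
    exact ⟨1, .inl rfl, by linarith, by rw [treeBend, if_neg hs, if_pos hlt]⟩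
  · have hgt := hge.lt_of_ne (L.column_injective.ne (L.ne_parent hd))
    have := L.x_add_two_le_iff.2 hgt
    exact ⟨-1, .inr rfl, by linarith, by
      rw [treeBend, if_neg hs, if_neg hge.not_gt, sub_eq_add_neg]⟩

theorem cycleBend_of_next (h : L.column w = L.column v + 1) :
    L.cycleBend v w = (L.x v, L.y w + 1) :=
  if_pos h

theorem cycleBend_to_root (v : V) : L.cycleBend v L.root = (L.x v, L.y L.root) :=
  if_neg (by simp [L.column_root])

theorem fst_cycleBend (v w : V) : (L.cycleBend v w).1 = L.x v := by
  unfold cycleBend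
  split_ifs <;> rfl

/-! ### Equations of the edges -/

theorem coords_of_mem_steep_segment (hd : d ≠ L.root) (hs : ¬ L.IsSpecial d)
    (hz : z ∈ segment ℝ (L.point (L.parent d)) (L.treeBend d)) :
    |z.1 - L.x (L.parent d)| ≤ 1 ∧
      z.2 = L.y (L.parent d) + |z.1 - L.x (L.parent d)| * (L.y d - L.y (L.parent d)) := by
  obtain ⟨ε, hε, -, hbend⟩ := L.exists_treeBend_eq_of_not_special hd hs
  rw [hbend] at hz
  obtain ⟨t, ht0, ht1, hz1, hz2⟩ := exists_coords_of_mem_segment hz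
  simp only [point] at hz1 hz2
  have habs : |z.1 - L.x (L.parent d)| = t := by
    rw [hz1]
    rcases hε with rfl | rfl <;> simp [abs_of_nonneg ht0]
  exact ⟨habs ▸ ht1, by rw [habs, hz2]⟩

theorem coords_of_mem_horizontal_segment (hd : d ≠ L.root) (hs : ¬ L.IsSpecial d)
    (hz : z ∈ segment ℝ (L.treeBend d) (L.point d)) :
    1 ≤ |z.1 - L.x (L.parent d)| ∧ z.2 = L.y d := by
  obtain ⟨ε, hε, hside, hbend⟩ := L.exists_treeBend_eq_of_not_special hd hs
  rw [hbend] at hz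
  obtain ⟨t, ht0, -, hz1, hz2⟩ := exists_coords_of_mem_segment hz
  simp only [point] at hz1 hz2
  refine ⟨?_, by linarith⟩
  rw [le_abs]
  rcases hε with rfl | rfl
  · left
    nlinarith
  · right
    nlinarith

theorem snd_eq_of_mem_treeEdge_of_not_special (hd : d ≠ L.root) (hs : ¬ L.IsSpecial d)
    (hz : z ∈ (L.treeEdge d).curve) :
    z.2 = L.y (L.parent d) +
      min 1 |z.1 - L.x (L.parent d)| * (L.y d - L.y (L.parent d)) := by
  rcases Polyline.mem_curve_oneBend.1 hz with hz | hz
  · obtain ⟨hle, hz2⟩ := L.coords_of_mem_steep_segment hd hs hz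
    rw [min_eq_right hle, hz2]
  · obtain ⟨hge, hz2⟩ := L.coords_of_mem_horizontal_segment hd hs hz
    rw [min_eq_left hge, hz2]
    ring

theorem snd_mem_Icc_of_mem_treeEdge_of_not_special (hd : d ≠ L.root) (hs : ¬ L.IsSpecial d)
    (hz : z ∈ (L.treeEdge d).curve) : z.2 ∈ Set.Icc (L.y (L.parent d)) (L.y d) := by
  have hz2 := L.snd_eq_of_mem_treeEdge_of_not_special hd hs hz
  have hdy := L.y_parent_add_two_le hd hs
  have hmin0 : 0 ≤ min 1 |z.1 - L.x (L.parent d)| := le_min zero_le_one (abs_nonneg _)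
  have hmin1 : min 1 |z.1 - L.x (L.parent d)| ≤ 1 := min_le_left _ _
  constructor <;> nlinarith

theorem eq_point_of_min_abs_eq_zero (hx : min 1 |z.1 - L.x v| = 0) (hy : z.2 = L.y v) :
    z = L.point v := by
  rcases min_choice 1 |z.1 - L.x v| with h | h
  · exact absurd (h.symm.trans hx) one_ne_zero
  · exact L.eq_point (sub_eq_zero.1 (abs_eq_zero.1 (h.symm.trans hx))) hy

theorem eq_point_parent_of_snd_eq (hd : d ≠ L.root) (hs : ¬ L.IsSpecial d)
    (hz : z ∈ (L.treeEdge d).curve) (hy : z.2 = L.y (L.parent d)) :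
    z = L.point (L.parent d) := by
  have hz2 := L.snd_eq_of_mem_treeEdge_of_not_special hd hs hz
  have hdy := L.y_parent_add_two_le hd hs
  have hmul : min 1 |z.1 - L.x (L.parent d)| * (L.y d - L.y (L.parent d)) = 0 := by linarith
  exact L.eq_point_of_min_abs_eq_zero
    ((mul_eq_zero.1 hmul).resolve_right (by linarith)) hy

theorem coords_of_mem_first_segment_of_special (hd : L.IsSpecial d)
    (hz : z ∈ segment ℝ (L.point (L.parent d)) (L.treeBend d)) :
    L.x (L.parent d) ≤ z.1 ∧ z.1 ≤ L.x (L.parent d) + 1 ∧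
      z.2 = L.y (L.parent d) - (z.1 - L.x (L.parent d)) := by
  rw [L.treeBend_of_special hd] at hz
  obtain ⟨t, ht0, ht1, hz1, hz2⟩ := exists_coords_of_mem_segment hz
  simp only [point, L.y_parent_of_special hd] at hz1 hz2 ⊢
  exact ⟨by linarith, by linarith, by linarith⟩

theorem coords_of_mem_second_segment_of_special (hd : L.IsSpecial d)
    (hz : z ∈ segment ℝ (L.treeBend d) (L.point d)) :
    L.x (L.parent d) + 1 ≤ z.1 ∧ z.1 ≤ L.x (L.parent d) + 2 ∧
      z.2 = L.y (L.parent d) - (z.1 - L.x (L.parent d)) := by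
  rw [L.treeBend_of_special hd] at hz
  obtain ⟨t, ht0, ht1, hz1, hz2⟩ := exists_coords_of_mem_segment hz
  simp only [point, L.y_parent_of_special hd, L.x_of_special hd] at hz1 hz2 ⊢
  exact ⟨by linarith, by linarith, by linarith⟩

theorem coords_of_mem_treeEdge_of_special (hd : L.IsSpecial d) (hz : z ∈ (L.treeEdge d).curve) :
    L.x (L.parent d) ≤ z.1 ∧ z.1 ≤ L.x (L.parent d) + 2 ∧
      z.2 = L.y (L.parent d) - (z.1 - L.x (L.parent d)) := by
  rcases Polyline.mem_curve_oneBend.1 hz with hz | hz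
  · obtain ⟨hl, hr, hz2⟩ := L.coords_of_mem_first_segment_of_special hd hz
    exact ⟨hl, by linarith, hz2⟩
  · obtain ⟨hl, hr, hz2⟩ := L.coords_of_mem_second_segment_of_special hd hz
    exact ⟨by linarith, hr, hz2⟩

theorem fst_eq_of_mem_vertical_segment (hz : z ∈ segment ℝ (L.point v) (L.cycleBend v w)) :
    z.1 = L.x v := by
  obtain ⟨t, -, -, hz1, -⟩ := exists_coords_of_mem_segment hz
  simpa [fst_cycleBend, point] using hz1

theorem coords_of_mem_slanted_segment (hvw : L.column w = L.column v + 1)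
    (hz : z ∈ segment ℝ (L.cycleBend v w) (L.point w)) :
    L.x w - 2 ≤ z.1 ∧ z.1 ≤ L.x w ∧ z.2 = L.y w + (L.x w - z.1) / 2 := by
  rw [L.cycleBend_of_next hvw] at hz
  obtain ⟨t, ht0, ht1, hz1, hz2⟩ := exists_coords_of_mem_segment hz
  simp only [point, L.x_eq_of_column_eq_succ hvw] at hz1 hz2 ⊢
  exact ⟨by linarith, by linarith, by linarith⟩

theorem snd_eq_of_mem_bottom_segment
    (hz : z ∈ segment ℝ (L.cycleBend v L.root) (L.point L.root)) : z.2 = L.y L.root := by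
  rw [L.cycleBend_to_root] at hz
  obtain ⟨t, -, -, -, hz2⟩ := exists_coords_of_mem_segment hz
  simpa [point] using hz2

/-! ### Planarity -/

theorem treeEdge_inter_of_same_parent (hc : c ≠ L.root) (hcs : ¬ L.IsSpecial c) (hd : d ≠ L.root)
    (hds : ¬ L.IsSpecial d) (hne : c ≠ d) (hparent : L.parent c = L.parent d)
    (hzc : z ∈ (L.treeEdge c).curve) (hzd : z ∈ (L.treeEdge d).curve) :
    z = L.point (L.parent d) := by
  have hz := L.snd_eq_of_mem_treeEdge_of_not_special hc hcs hzc
  have hz' := L.snd_eq_of_mem_treeEdge_of_not_special hd hds hzd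
  rw [hparent] at hz
  have hy : L.y c - L.y d ≠ 0 := fun h =>
    hne (L.eq_of_y_lt_y_add_two (by linarith) (by linarith))
  have hmul : min 1 |z.1 - L.x (L.parent d)| * (L.y c - L.y d) = 0 := by linarith
  have hmin := (mul_eq_zero.1 hmul).resolve_right hy
  exact L.eq_point_of_min_abs_eq_zero hmin (by rw [hz', hmin]; ring)

theorem treeEdge_inter_of_row_parent_lt (hc : c ≠ L.root) (hcs : ¬ L.IsSpecial c)
    (hd : d ≠ L.root) (hds : ¬ L.IsSpecial d) (hlt : L.row (L.parent c) < L.row (L.parent d))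
    (hzc : z ∈ (L.treeEdge c).curve) (hzd : z ∈ (L.treeEdge d).curve) :
    c = L.parent d ∧ z = L.point (L.parent d) := by
  have hzc := (L.snd_mem_Icc_of_mem_treeEdge_of_not_special hc hcs hzc).2
  have hzd' := (L.snd_mem_Icc_of_mem_treeEdge_of_not_special hd hds hzd).1
  have hle := L.y_lt_add_two_iff.2 (L.parent_not_between d c hd hc hcs hlt)
  obtain rfl := L.eq_of_y_lt_y_add_two (u := c) (v := L.parent d) hle (by linarith)
  exact ⟨rfl, L.eq_point_parent_of_snd_eq hd hds hzd (by linarith)⟩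

theorem notMem_treeEdge_of_special_of_special (hc : L.IsSpecial c) (hd : L.IsSpecial d)
    (hlt : L.column (L.parent c) < L.column (L.parent d)) (hzc : z ∈ (L.treeEdge c).curve) :
    z ∉ (L.treeEdge d).curve := by
  intro hzd
  obtain ⟨-, hzc, -⟩ := L.coords_of_mem_treeEdge_of_special hc hzc
  obtain ⟨hzd, -, -⟩ := L.coords_of_mem_treeEdge_of_special hd hzd
  have hx := L.x_add_two_le_iff.2 hlt
  have hxc := L.x_of_special hc
  obtain rfl := L.eq_of_x_lt_x_add_two (u := c) (v := L.parent d) (by linarith) (by linarith)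
  exact L.parent_not_special d (L.ne_root_of_special hd) hc

theorem eq_parent_of_mem_treeEdge_of_special (hc : L.IsSpecial c) (hd : d ≠ L.root)
    (hds : ¬ L.IsSpecial d) (hzc : z ∈ (L.treeEdge c).curve) (hzd : z ∈ (L.treeEdge d).curve)
    (hlt : L.row (L.parent d) < L.row (L.parent c)) : d = L.parent c := by
  obtain ⟨-, hxr, hzc2⟩ := L.coords_of_mem_treeEdge_of_special hc hzc
  have hzd2 := (L.snd_mem_Icc_of_mem_treeEdge_of_not_special hd hds hzd).2
  have hcp := L.y_parent_of_special hc
  have hrow : L.row c ≤ L.row d := L.y_lt_add_two_iff.1 (by linarith)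
  have hne : L.row c ≠ L.row d := fun h => hds (L.row_injective h ▸ hc)
  have hge := L.parent_not_between c d (L.ne_root_of_special hc) hd hds hlt
  have hsucc := L.row_parent_of_special c hc
  exact L.row_injective (by omega)

theorem treeEdge_inter_of_special_of_not_special (hc : L.IsSpecial c) (hd : d ≠ L.root)
    (hds : ¬ L.IsSpecial d) (hzc : z ∈ (L.treeEdge c).curve) (hzd : z ∈ (L.treeEdge d).curve) :
    (L.parent d = L.parent c ∨ d = L.parent c) ∧ z = L.point (L.parent c) := by
  obtain ⟨hxl, hxr, hzc2⟩ := L.coords_of_mem_treeEdge_of_special hc hzc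
  obtain ⟨hyl, -⟩ := L.snd_mem_Icc_of_mem_treeEdge_of_not_special hd hds hzd
  have hrow : L.row (L.parent d) ≤ L.row (L.parent c) := L.y_lt_add_two_iff.1 (by linarith)
  rcases hrow.eq_or_lt with heq | hlt
  · have hparent := L.row_injective heq
    rw [hparent] at hyl
    exact ⟨.inl hparent, L.eq_point (by linarith) (by linarith)⟩
  obtain rfl := L.eq_parent_of_mem_treeEdge_of_special hc hd hds hzc hzd hlt
  refine ⟨.inr rfl, ?_⟩
  have hz2 := L.snd_eq_of_mem_treeEdge_of_not_special hd hds hzd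
  rcases le_or_gt 1 |z.1 - L.x (L.parent (L.parent c))| with hfar | hnear
  · rw [min_eq_left hfar] at hz2
    exact L.eq_point (by linarith) (by linarith)
  · -- The steep part of the edge of `parent c` stays within distance one of its column, which is
    -- neither the column of `parent c` nor that of `c`.
    exfalso
    rw [abs_lt] at hnear
    have hxc := L.x_of_special hc
    rcases le_or_gt z.1 (L.x (L.parent c) + 1) with hleft | hright
    · exact L.ne_parent hd (L.eq_of_x_lt_x_add_two (by linarith) (by linarith))
    · have heq : L.parent (L.parent c) = c :=
        L.eq_of_x_lt_x_add_two (by linarith) (by linarith)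
      exact L.parent_not_special _ hd (heq.symm ▸ hc)

theorem exists_common_vertex_of_mem_treeEdge (hc : c ≠ L.root) (hd : d ≠ L.root) (hne : c ≠ d)
    (hzc : z ∈ (L.treeEdge c).curve) (hzd : z ∈ (L.treeEdge d).curve) :
    ∃ u, u ∈ s(L.parent c, c) ∧ u ∈ s(L.parent d, d) ∧ z = L.point u := by
  by_cases hcs : L.IsSpecial c <;> by_cases hds : L.IsSpecial d
  · have hparent : L.parent c ≠ L.parent d := fun h => hne (L.column_injective (by
      rw [L.column_of_special c hcs, L.column_of_special d hds, h]))
    rcases (L.column_injective.ne hparent).lt_or_gt with hlt | hlt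
    · exact (L.notMem_treeEdge_of_special_of_special hcs hds hlt hzc hzd).elim
    · exact (L.notMem_treeEdge_of_special_of_special hds hcs hlt hzd hzc).elim
  · obtain ⟨heq, hz⟩ := L.treeEdge_inter_of_special_of_not_special hcs hd hds hzc hzd
    exact ⟨_, Sym2.mem_mk_left _ _, Sym2.mem_iff.2 (heq.imp Eq.symm Eq.symm), hz⟩
  · obtain ⟨heq, hz⟩ := L.treeEdge_inter_of_special_of_not_special hds hc hcs hzd hzc
    exact ⟨_, Sym2.mem_iff.2 (heq.imp Eq.symm Eq.symm), Sym2.mem_mk_left _ _, hz⟩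
  · rcases lt_trichotomy (L.row (L.parent c)) (L.row (L.parent d)) with hlt | heq | hgt
    · obtain ⟨heq, hz⟩ := L.treeEdge_inter_of_row_parent_lt hc hcs hd hds hlt hzc hzd
      exact ⟨_, Sym2.mem_iff.2 (.inr heq.symm), Sym2.mem_mk_left _ _, hz⟩
    · have heq := L.row_injective heq
      exact ⟨_, Sym2.mem_iff.2 (.inl heq.symm), Sym2.mem_mk_left _ _,
        L.treeEdge_inter_of_same_parent hc hcs hd hds hne heq hzc hzd⟩
    · obtain ⟨heq, hz⟩ := L.treeEdge_inter_of_row_parent_lt hd hds hc hcs hgt hzd hzc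
      exact ⟨_, Sym2.mem_mk_left _ _, Sym2.mem_iff.2 (.inr heq.symm), hz⟩

theorem coords_of_mem_cycleEdge_of_next (hvw : L.column w = L.column v + 1)
    (hz : z ∈ (L.cycleEdge v w).curve) :
    L.x v ≤ z.1 ∧ z.1 ≤ L.x w ∧ (z.1 = L.x w → z = L.point w) := by
  have hx := L.x_eq_of_column_eq_succ hvw
  rcases Polyline.mem_curve_oneBend.1 hz with hz | hz
  · have hz1 := L.fst_eq_of_mem_vertical_segment hz
    exact ⟨hz1.ge, by linarith, fun h => by linarith⟩
  · obtain ⟨hl, hr, hz2⟩ := L.coords_of_mem_slanted_segment hvw hz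
    exact ⟨by linarith, hr, fun h => L.eq_point h (by linarith)⟩

theorem eq_root_of_mem_cycleEdge_of_next (hvw : L.column w = L.column v + 1)
    (hz : z ∈ (L.cycleEdge v w).curve) (hy : z.2 = L.y L.root) :
    v = L.root ∧ z = L.point L.root := by
  have hv := L.y_root_le v
  have hw := L.y_root_le w
  rcases Polyline.mem_curve_oneBend.1 hz with hz | hz
  · have hz1 := L.fst_eq_of_mem_vertical_segment hz
    rw [L.cycleBend_of_next hvw] at hz
    obtain ⟨t, ht0, ht1, -, hz2⟩ := exists_coords_of_mem_segment hz
    simp only [point] at hz2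
    have ht : t = 0 := by
      nlinarith [mul_nonneg ht0 (sub_nonneg.2 hw), mul_nonneg (sub_nonneg.2 ht1) (sub_nonneg.2 hv)]
    rw [ht, zero_mul, add_zero, hy] at hz2
    obtain rfl := L.eq_root_of_y_le hz2.ge
    exact ⟨rfl, L.eq_point hz1 hy⟩
  · obtain ⟨-, hr, hz2⟩ := L.coords_of_mem_slanted_segment hvw hz
    obtain rfl := L.eq_root_of_y_le (v := w) (by linarith)
    exact absurd (L.column_root.symm.trans hvw) (Nat.succ_ne_zero _).symm

theorem cycleEdge_inter_of_column_lt {v' w' : V} (hvw : L.column w = L.column v + 1)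
    (hvw' : L.column w' = L.column v' + 1) (hlt : L.column v < L.column v')
    (hz : z ∈ (L.cycleEdge v w).curve) (hz' : z ∈ (L.cycleEdge v' w').curve) :
    w = v' ∧ z = L.point w := by
  obtain ⟨-, hr, hend⟩ := L.coords_of_mem_cycleEdge_of_next hvw hz
  obtain ⟨hl, -, -⟩ := L.coords_of_mem_cycleEdge_of_next hvw' hz'
  have hx := L.x_add_two_le_iff.2 hlt
  rw [← L.x_eq_of_column_eq_succ hvw] at hx
  exact ⟨L.eq_of_x_lt_x_add_two (by linarith) (by linarith), hend (by linarith)⟩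

theorem cycleEdge_inter_closing {u : V} (hvw : L.column w = L.column v + 1)
    (hu : L.column u + 1 = n) (hz : z ∈ (L.cycleEdge v w).curve)
    (hz' : z ∈ (L.cycleEdge u L.root).curve) :
    w = u ∧ z = L.point w ∨ v = L.root ∧ z = L.point v := by
  rcases Polyline.mem_curve_oneBend.1 hz' with hz' | hz'
  · have hz1 := L.fst_eq_of_mem_vertical_segment hz'
    obtain ⟨-, hr, hend⟩ := L.coords_of_mem_cycleEdge_of_next hvw hz
    have hwu : L.x w < L.x u + 2 := lineCoord_lt_add_two_iff.2 (by have := L.column_lt w; omega)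
    obtain rfl := L.eq_of_x_lt_x_add_two hwu (by linarith)
    exact .inl ⟨rfl, hend hz1⟩
  · obtain ⟨rfl, hroot⟩ :=
      L.eq_root_of_mem_cycleEdge_of_next hvw hz (L.snd_eq_of_mem_bottom_segment hz')
    exact .inr ⟨rfl, hroot⟩

theorem exists_common_vertex_of_mem_cycleEdge {v' w' : V} (h : L.IsCycleArc v w)
    (h' : L.IsCycleArc v' w') (hne : s(v, w) ≠ s(v', w')) (hz : z ∈ (L.cycleEdge v w).curve)
    (hz' : z ∈ (L.cycleEdge v' w').curve) :
    ∃ u, u ∈ s(v, w) ∧ u ∈ s(v', w') ∧ z = L.point u := by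
  rcases h with hvw | ⟨hv, rfl⟩ <;> rcases h' with hvw' | ⟨hv', rfl⟩
  · rcases lt_trichotomy (L.column v) (L.column v') with hlt | heq | hgt
    · obtain ⟨rfl, hpoint⟩ := L.cycleEdge_inter_of_column_lt hvw hvw' hlt hz hz'
      exact ⟨w, by simp, by simp, hpoint⟩
    · obtain rfl := L.column_injective heq
      exact (hne (by rw [L.column_injective (hvw.trans hvw'.symm)])).elim
    · obtain ⟨rfl, hpoint⟩ := L.cycleEdge_inter_of_column_lt hvw' hvw hgt hz' hz
      exact ⟨w', by simp, by simp, hpoint⟩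
  · rcases L.cycleEdge_inter_closing hvw hv' hz hz' with ⟨rfl, hpoint⟩ | ⟨rfl, hpoint⟩
    exacts [⟨w, by simp, by simp, hpoint⟩, ⟨L.root, by simp, by simp, hpoint⟩]
  · rcases L.cycleEdge_inter_closing hvw' hv hz' hz with ⟨rfl, hpoint⟩ | ⟨rfl, hpoint⟩
    exacts [⟨w', by simp, by simp, hpoint⟩, ⟨L.root, by simp, by simp, hpoint⟩]
  · exact (hne (by rw [L.column_injective (a₁ := v) (a₂ := v') (by omega)])).elim

/-! ### Crossings between tree edges and cycle edges -/

theorem meetRAC_vertical_segment_of_special {s : (ℝ × ℝ) × (ℝ × ℝ)} (hd : L.IsSpecial d)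
    (hs : s ∈ (L.treeEdge d).segs) : MeetRAC s (L.point v, L.cycleBend v w) := by
  have hx := L.x_of_special hd
  have hy := L.y_parent_of_special hd
  have hbend := L.treeBend_of_special hd
  rcases Polyline.mem_segs_oneBend.1 hs with rfl | rfl
  · refine .of_forall_eq (z := L.point (L.parent d)) (fun z hz hzv => ?_)
      (.inl (mt left_mem_openSegment_iff.1 fun h => by simp [hbend, point] at h))
    obtain ⟨hl, hr, hz2⟩ := L.coords_of_mem_first_segment_of_special hd hz
    have hzv := L.fst_eq_of_mem_vertical_segment hzv
    obtain rfl := L.eq_of_x_lt_x_add_two (u := v) (v := L.parent d) (by linarith) (by linarith)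
    exact L.eq_point hzv (by linarith)
  · refine .of_forall_eq (z := L.point d) (fun z hz hzv => ?_)
      (.inl (mt right_mem_openSegment_iff.1 fun h => by simp [hbend, point] at h))
    obtain ⟨hl, hr, hz2⟩ := L.coords_of_mem_second_segment_of_special hd hz
    have hzv := L.fst_eq_of_mem_vertical_segment hzv
    obtain rfl := L.eq_of_x_lt_x_add_two (u := v) (v := d) (by linarith) (by linarith)
    exact L.eq_point hzv (by linarith)

theorem meetRAC_vertical_segment_of_not_special {s : (ℝ × ℝ) × (ℝ × ℝ)} (hd : d ≠ L.root)
    (hds : ¬ L.IsSpecial d) (hs : s ∈ (L.treeEdge d).segs) :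
    MeetRAC s (L.point v, L.cycleBend v w) := by
  obtain ⟨ε, hε, -, hbend⟩ := L.exists_treeBend_eq_of_not_special hd hds
  rcases Polyline.mem_segs_oneBend.1 hs with rfl | rfl
  · have hne : L.point (L.parent d) ≠ L.treeBend d := by
      rcases hε with rfl | rfl <;> simp [hbend, point]
    refine .of_forall_eq (z := L.point (L.parent d)) (fun z hz hzv => ?_)
      (.inl (mt left_mem_openSegment_iff.1 hne))
    obtain ⟨hle, hz2⟩ := L.coords_of_mem_steep_segment hd hds hz
    have hzv := L.fst_eq_of_mem_vertical_segment hzv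
    obtain ⟨hl, hr⟩ := abs_le.1 hle
    obtain rfl := L.eq_of_x_lt_x_add_two (u := v) (v := L.parent d) (by linarith) (by linarith)
    exact L.eq_point hzv (by rw [hz2, hzv, sub_self, abs_zero, zero_mul, add_zero])
  · exact .of_horizontal_of_vertical (by rw [hbend, point]) (L.fst_cycleBend v w).symm

theorem one_le_abs_of_mem_treeEdge_of_mem_slanted_segment (hd : d ≠ L.root)
    (hds : ¬ L.IsSpecial d) (hvw : L.column w = L.column v + 1)
    (hw : L.column (L.parent d) < L.column w) (hz : z ∈ (L.treeEdge d).curve)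
    (hzw : z ∈ segment ℝ (L.cycleBend v w) (L.point w)) : 1 ≤ |z.1 - L.x (L.parent d)| := by
  by_contra! hnear
  obtain ⟨-, hnear_right⟩ := abs_lt.1 hnear
  obtain ⟨hl, hr, hzw2⟩ := L.coords_of_mem_slanted_segment hvw hzw
  obtain ⟨hyl, hyr⟩ := L.snd_mem_Icc_of_mem_treeEdge_of_not_special hd hds hz
  have hvp : L.column v ≤ L.column (L.parent d) := by
    have hxw := L.x_eq_of_column_eq_succ hvw
    exact lineCoord_lt_add_two_iff.1 (show L.x v < L.x (L.parent d) + 2 by linarith)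
  have hcol : L.column w = L.column (L.parent d) + 1 := by omega
  have hxw := L.x_eq_of_column_eq_succ hcol
  have hrow : L.row (L.parent d) < L.row w := by
    refine lt_of_le_of_ne (L.y_lt_add_two_iff.1 (by linarith)) fun h => ?_
    rw [← L.row_injective h] at hcol
    omega
  rcases (L.next_not_between w d hd hds hcol hrow).lt_or_eq with hlt | heq
  · have := L.y_add_two_le_iff.2 hlt
    linarith
  · obtain rfl := L.row_injective heq
    linarith

theorem eq_point_of_mem_treeEdge_of_mem_slanted_segment (hd : d ≠ L.root)
    (hds : ¬ L.IsSpecial d) (hvw : L.column w = L.column v + 1) (hz : z ∈ (L.treeEdge d).curve)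
    (hzw : z ∈ segment ℝ (L.cycleBend v w) (L.point w)) : z = L.point w := by
  obtain ⟨hl, hr, hzw2⟩ := L.coords_of_mem_slanted_segment hvw hzw
  have hz2 := L.snd_eq_of_mem_treeEdge_of_not_special hd hds hz
  suffices hzx : z.1 = L.x w from L.eq_point hzx (by linarith)
  rcases le_or_gt 1 |z.1 - L.x (L.parent d)| with hfar | hnear
  · rw [min_eq_left hfar] at hz2
    obtain rfl := L.eq_of_y_lt_y_add_two (u := w) (v := d) (by linarith) (by linarith)
    linarith
  · have hle : L.column w ≤ L.column (L.parent d) := not_lt.1 fun hlt => hnear.not_ge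
      (L.one_le_abs_of_mem_treeEdge_of_mem_slanted_segment hd hds hvw hlt hz hzw)
    obtain ⟨hnear_left, -⟩ := abs_lt.1 hnear
    obtain rfl := L.eq_of_x_lt_x_add_two (u := w) (v := L.parent d)
      (lineCoord_lt_add_two_iff.2 hle) (by linarith)
    rw [min_eq_right hnear.le, abs_of_nonpos (by linarith)] at hz2
    have hdy := L.y_parent_add_two_le hd hds
    nlinarith

theorem eq_point_of_mem_special_of_mem_slanted_segment (hd : L.IsSpecial d)
    (hvw : L.column w = L.column v + 1) (hz : z ∈ (L.treeEdge d).curve)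
    (hzw : z ∈ segment ℝ (L.cycleBend v w) (L.point w)) : z = L.point w := by
  obtain ⟨hl, hr, hzw2⟩ := L.coords_of_mem_slanted_segment hvw hzw
  obtain ⟨hl', hr', hz2⟩ := L.coords_of_mem_treeEdge_of_special hd hz
  have hx := L.x_of_special hd
  have hy := L.y_parent_of_special hd
  suffices hzx : z.1 = L.x w from L.eq_point hzx (by linarith)
  rcases le_or_gt (L.x w) z.1 with hge | hlt
  · linarith
  rcases lt_or_ge (L.x w) (L.x d + 2) with hlt' | hge'
  · obtain rfl := L.eq_of_x_lt_x_add_two (u := w) (v := d) hlt' (by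
      by_contra! h
      linarith)
    linarith
  · obtain rfl := L.eq_of_y_lt_y_add_two (u := w) (v := d) (by linarith) (by linarith)
    linarith

theorem eq_point_root_of_mem_treeEdge_of_snd_eq (hd : d ≠ L.root)
    (hz : z ∈ (L.treeEdge d).curve) (hy : z.2 = L.y L.root) : z = L.point L.root := by
  by_cases hds : L.IsSpecial d
  · obtain ⟨-, hr, hz2⟩ := L.coords_of_mem_treeEdge_of_special hds hz
    have := L.y_parent_of_special hds
    exact absurd (L.eq_root_of_y_le (by linarith)) hd
  · obtain ⟨hyl, -⟩ := L.snd_mem_Icc_of_mem_treeEdge_of_not_special hd hds hz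
    have hparent := L.eq_root_of_y_le (hyl.trans_eq hy)
    rw [← hparent] at hy ⊢
    exact L.eq_point_parent_of_snd_eq hd hds hz hy

theorem cycleBend_ne_point (hd : d ≠ L.root) (h : L.IsCycleArc v w) :
    L.cycleBend v w ≠ L.point w := by
  intro heq
  have hx : L.x v = L.x w := (L.fst_cycleBend v w).symm.trans (congrArg Prod.fst heq)
  obtain rfl := L.eq_of_x_lt_x_add_two (u := v) (v := w) (by linarith) (by linarith)
  rcases h with h | ⟨hn, rfl⟩
  · omega
  · have hcol := L.column_lt d
    have hroot := L.column_root
    exact hd (L.column_injective (by omega))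

theorem meetRAC_treeEdge_cycleEdge {s t : (ℝ × ℝ) × (ℝ × ℝ)} (hd : d ≠ L.root)
    (hvw : L.IsCycleArc v w) (hs : s ∈ (L.treeEdge d).segs) (ht : t ∈ (L.cycleEdge v w).segs) :
    MeetRAC s t := by
  rcases Polyline.mem_segs_oneBend.1 ht with rfl | rfl
  · by_cases hds : L.IsSpecial d
    · exact L.meetRAC_vertical_segment_of_special hds hs
    · exact L.meetRAC_vertical_segment_of_not_special hd hds hs
  · refine .of_forall_eq (z := L.point w) (fun z hzs hz => ?_)
      (.inr (mt right_mem_openSegment_iff.1 (L.cycleBend_ne_point hd hvw)))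
    have hzd := Polyline.segment_subset_curve hs hzs
    rcases hvw with hvw | ⟨-, rfl⟩
    · by_cases hds : L.IsSpecial d
      · exact L.eq_point_of_mem_special_of_mem_slanted_segment hds hvw hzd hz
      · exact L.eq_point_of_mem_treeEdge_of_mem_slanted_segment hd hds hvw hzd hz
    · exact L.eq_point_root_of_mem_treeEdge_of_snd_eq hd hzd (L.snd_eq_of_mem_bottom_segment hz)

/-! ### The grid -/

theorem onGridPt_add (v w : V) {i j : ℤ} (hi : 0 ≤ 2 * (L.column v : ℤ) + i)
    (hi' : 2 * (L.column v : ℤ) + i + 2 ≤ 2 * n) (hj : 0 ≤ j) (hj' : j ≤ 1) :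
    OnGridPt (2 * n - 1) (2 * n) (L.x v + i, L.y w + j) := by
  have hw := L.row_lt w
  exact ⟨2 * L.column v + 1 + i, 2 * L.row w + 1 + j, by simp [x, y, lineCoord],
    by omega, by omega, by omega, by omega⟩

theorem onGridPt_point (v : V) : OnGridPt (2 * n - 1) (2 * n) (L.point v) := by
  have hv := L.column_lt v
  simpa [point] using L.onGridPt_add v v (i := 0) (j := 0) (by omega) (by omega) le_rfl zero_le_one

theorem onGridPt_treeBend (hd : d ≠ L.root) : OnGridPt (2 * n - 1) (2 * n) (L.treeBend d) := by
  have hcol := L.column_lt d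
  have hne := L.column_injective.ne (L.ne_parent hd)
  unfold treeBend
  split_ifs with hs hlt
  · have := L.column_of_special d hs
    simpa using L.onGridPt_add (L.parent d) d (i := 1) (j := 1) (by omega) (by omega)
      zero_le_one le_rfl
  · simpa using L.onGridPt_add (L.parent d) d (i := 1) (j := 0) (by omega) (by omega)
      le_rfl zero_le_one
  · have := L.column_lt (L.parent d)
    simpa [← sub_eq_add_neg] using L.onGridPt_add (L.parent d) d (i := -1) (j := 0) (by omega)
      (by omega) le_rfl zero_le_one

theorem onGridPt_cycleBend (v w : V) : OnGridPt (2 * n - 1) (2 * n) (L.cycleBend v w) := by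
  have hv := L.column_lt v
  unfold cycleBend
  split_ifs
  · simpa using L.onGridPt_add v w (i := 0) (j := 1) (by omega) (by omega) zero_le_one le_rfl
  · simpa using L.onGridPt_add v w (i := 0) (j := 0) (by omega) (by omega) le_rfl zero_le_one

theorem exists_racSim {A C : SimpleGraph V}
    (hA : ∀ a b, A.Adj a b → ∃ d, d ≠ L.root ∧ s(a, b) = s(L.parent d, d))
    (hC : ∀ a b, C.Adj a b → ∃ v w, L.IsCycleArc v w ∧ s(a, b) = s(v, w)) :
    ∃ D : SimDrawing ![A, C], D.IsRacSim ∧ D.OnGrid (2 * n - 1) (2 * n) ∧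
      ∀ i, D.BendsAtMost i 1 := by
  refine SimDrawing.exists_isRacSim_of_arcs (pos := L.point)
    (Arc := ![fun v w => w ≠ L.root ∧ v = L.parent w, L.IsCycleArc])
    (bend := ![fun _ w => L.treeBend w, L.cycleBend])
    L.point_injective ?_ ?_ ?_ L.onGridPt_point ?_
  · refine Fin.forall_fin_two.2 ⟨fun a b hab => ?_, hC⟩
    obtain ⟨d, hd, heq⟩ := hA a b hab
    exact ⟨L.parent d, d, ⟨hd, rfl⟩, heq⟩
  · refine Fin.forall_fin_two.2 ⟨?_, fun v w v' w' hvw hvw' hne z hz hz' =>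
      L.exists_common_vertex_of_mem_cycleEdge hvw hvw' hne hz hz'⟩
    rintro _ c _ d ⟨hc, rfl⟩ ⟨hd, rfl⟩ hne z hz hz'
    exact L.exists_common_vertex_of_mem_treeEdge hc hd (fun h => hne (by rw [h])) hz hz'
  · intro i j hij
    obtain ⟨rfl, rfl⟩ : i = 0 ∧ j = 1 := by decide +revert
    rintro _ d v w ⟨hd, rfl⟩ hvw s hs t ht
    exact L.meetRAC_treeEdge_cycleEdge hd hvw hs ht
  · exact Fin.forall_fin_two.2 ⟨fun _ d hd => L.onGridPt_treeBend hd.1,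
      fun v w _ => L.onGridPt_cycleBend v w⟩

end RacLayout

/-! ### Spanning cycles -/

theorem bijective_getVert_of_isHamiltonianCycle {V : Type*} [Fintype V] [DecidableEq V]
    {G : SimpleGraph V} {r : V} {p : G.Walk r r} (hp : p.IsHamiltonianCycle) :
    Function.Bijective fun i : Fin (Fintype.card V) => p.getVert i := by
  refine (Fintype.bijective_iff_injective_and_card _).2 ⟨fun i j hij => Fin.ext ?_, by simp⟩
  have hlen := hp.length_eq
  exact hp.isCycle.getVert_injOn' (show i.1 ≤ p.length - 1 by omega)
    (show j.1 ≤ p.length - 1 by omega) hij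

section Cycle

variable {V : Type} {C : SimpleGraph V} {r : V}

theorem IsSpanningCycle.exists_isHamiltonianCycle [Finite V] [DecidableEq V]
    (hC : IsSpanningCycle C) (r : V) : ∃ p : C.Walk r r, p.IsHamiltonianCycle := by
  have hcycles : C.IsCycles := fun v _ => hC.2 v
  have hr : (C.neighborSet r).Nonempty := Set.nonempty_of_ncard_ne_zero <| by
    have := hC.2 r
    unfold vdeg at this
    omega
  obtain ⟨p, hp, hverts⟩ := hcycles.exists_cycle_toSubgraph_verts_eq_connectedComponentSupp
    (c := C.connectedComponentMk r) (by simp) hr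
  refine ⟨p, Walk.isHamiltonianCycle_iff_isCycle_and_support_count_tail_eq_one.2
    ⟨hp, fun v => List.count_eq_one_of_mem hp.support_nodup ?_⟩⟩
  have hv : v ∈ p.support := by
    rw [← Walk.mem_verts_toSubgraph, hverts]
    exact ConnectedComponent.eq.2 (hC.1 v r)
  rcases p.mem_support_iff.1 hv with rfl | hv
  · exact p.end_mem_tail_support hp.not_nil
  · exact hv

theorem IsSpanningCycle.exists_eq_getVert_of_adj [Fintype V] [DecidableEq V]
    (hC : IsSpanningCycle C) {p : C.Walk r r} (hp : p.IsHamiltonianCycle) {a b : V}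
    (hab : C.Adj a b) : ∃ i < Fintype.card V, s(a, b) = s(p.getVert i, p.getVert (i + 1)) := by
  classical
  have hcycles : C.IsCycles := fun v _ => hC.2 v
  have ha : a ∈ p.toSubgraph.verts := p.mem_verts_toSubgraph.2 (hp.mem_support a)
  obtain ⟨i, hi, hlt⟩ := Walk.toSubgraph_adj_iff _ |>.1 <|
    (hp.isCycle.adj_toSubgraph_iff_of_isCycles hcycles ha b).2 hab
  exact ⟨i, hp.length_eq ▸ hlt, hi.symm⟩

theorem IsSpanningCycle.exists_column [Fintype V] (hC : IsSpanningCycle C) (r : V) :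
    ∃ column : V → ℕ, (∀ v, column v < Fintype.card V) ∧ Function.Injective column ∧
      column r = 0 ∧ ∀ a b, C.Adj a b → ∃ v w,
        (column w = column v + 1 ∨ column v + 1 = Fintype.card V ∧ w = r) ∧
          s(a, b) = s(v, w) := by
  classical
  obtain ⟨p, hp⟩ := hC.exists_isHamiltonianCycle r
  let vertex := Equiv.ofBijective _ (bijective_getVert_of_isHamiltonianCycle hp)
  have column_getVert (i : ℕ) (hi : i < Fintype.card V) :
      (vertex.symm (p.getVert i) : ℕ) = i :=
    congrArg Fin.val (vertex.symm_apply_apply ⟨i, hi⟩)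
  have hpos : 0 < Fintype.card V := Fintype.card_pos_iff.2 ⟨r⟩
  refine ⟨fun v => vertex.symm v, fun v => (vertex.symm v).2,
    Fin.val_injective.comp vertex.symm.injective, by simpa using column_getVert 0 hpos, ?_⟩
  intro a b hab
  obtain ⟨i, hi, heq⟩ := hC.exists_eq_getVert_of_adj hp hab
  refine ⟨p.getVert i, p.getVert (i + 1), ?_, heq⟩
  simp only [column_getVert i hi]
  rcases Nat.lt_or_eq_of_le (Nat.succ_le_of_lt hi) with hlt | hlast
  · exact .inl (column_getVert _ hlt)
  · exact .inr ⟨hlast, by rw [← Nat.succ_eq_add_one, hlast, ← hp.length_eq, p.getVert_length]⟩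

end Cycle

/-! ### Rooted caterpillars -/

section Rooting

variable {V : Type*} {A : SimpleGraph V} {r p q d : V}

theorem exists_adj_dist_eq_succ (hA : A.Connected) (hd : d ≠ r) :
    ∃ p, A.Adj p d ∧ A.dist r d = A.dist r p + 1 := by
  obtain ⟨W, hW⟩ := hA.exists_walk_length_eq_dist d r
  cases W with
  | nil => exact absurd rfl hd
  | @cons _ p _ hdp W =>
    refine ⟨p, hdp.symm, ?_⟩
    have hle := dist_le W
    have htri := hA.dist_triangle (u := d) (v := p) (w := r)
    rw [dist_eq_one_iff_adj.2 hdp] at htri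
    rw [Walk.length_cons] at hW
    rw [dist_comm (u := r), dist_comm (u := r)]
    omega

theorem eq_of_adj_of_dist_eq_succ (hA : A.IsTree) (hpd : A.Adj p d) (hqd : A.Adj q d)
    (hp : A.dist r d = A.dist r p + 1) (hq : A.dist r d = A.dist r q + 1) : p = q := by
  obtain ⟨P, hP⟩ := hA.connected.exists_walk_length_eq_dist r p
  obtain ⟨Q, hQ⟩ := hA.connected.exists_walk_length_eq_dist r q
  have hP' : (P.concat hpd).IsPath :=
    Walk.isPath_of_length_eq_dist _ (by rw [Walk.length_concat, hP, hp])
  have hQ' : (Q.concat hqd).IsPath :=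
    Walk.isPath_of_length_eq_dist _ (by rw [Walk.length_concat, hQ, hq])
  have hPQ : P.concat hpd = Q.concat hqd :=
    congrArg Subtype.val <|
      (hA.isAcyclic.subsingleton_path r d).elim ⟨_, hP'⟩ ⟨_, hQ'⟩
  simpa using congrArg Walk.penultimate hPQ

theorem injOn_dist_of_ncard_le [Finite V] (hA : A.Connected) {S : Set V}
    (hS : ∀ p d, A.Adj p d → A.dist r d = A.dist r p + 1 → p ∈ S)
    (hr : (A.neighborSet r ∩ S).ncard ≤ 1)
    (hdeg : ∀ p ∈ S, (A.neighborSet p ∩ S).ncard ≤ 2) : S.InjOn (A.dist r) := by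
  suffices ∀ k, ∀ u ∈ S, ∀ v ∈ S, A.dist r u = k → A.dist r v = k → u = v from
    fun u hu v hv huv => this _ u hu v hv huv rfl
  intro k
  induction k with
  | zero =>
    intro u _ v _ hu hv
    rw [← hA.dist_eq_zero_iff.1 hu, ← hA.dist_eq_zero_iff.1 hv]
  | succ k ih =>
    intro u hu v hv hku hkv
    have ne_root {w} (hw : A.dist r w = k + 1) : w ≠ r := by
      rintro rfl
      simp at hw
    obtain ⟨p, hpu, hp⟩ := exists_adj_dist_eq_succ hA (ne_root hku)
    obtain ⟨q, hqv, hq⟩ := exists_adj_dist_eq_succ hA (ne_root hkv)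
    have hpS := hS p u hpu hp
    obtain rfl : p = q := ih p hpS q (hS q v hqv hq) (by omega) (by omega)
    by_contra huv
    -- Two children of `p` and its parent would be three neighbours of `p` in `S`.
    by_cases hpr : p = r
    · subst hpr
      exact hr.not_gt ((Set.one_lt_ncard (Set.toFinite _)).2 ⟨u, ⟨hpu, hu⟩, v, ⟨hqv, hv⟩, huv⟩)
    · obtain ⟨g, hgp, hg⟩ := exists_adj_dist_eq_succ hA hpr
      refine (hdeg p hpS).not_gt ((Set.two_lt_ncard_iff (Set.toFinite _)).2
        ⟨u, v, g, ⟨hpu, hu⟩, ⟨hqv, hv⟩, ⟨hgp.symm, hS g p hgp hg⟩, huv, ?_, ?_⟩) <;>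
      · rintro rfl
        omega

end Rooting

section Caterpillar

variable {V : Type} {A : SimpleGraph V} {e r : V}

theorem vdeg_induce (S : Set V) (v : S) :
    vdeg (A.induce S) v = (A.neighborSet v ∩ S).ncard := by
  rw [vdeg, ← Set.ncard_image_of_injective _ Subtype.val_injective]
  congr 1
  ext w
  simp [and_comm]

/-- The vertices of a tree that are not leaves. -/
def innerVertices (A : SimpleGraph V) : Set V := {v | vdeg A v ≠ 1}

theorem nonempty_innerVertices [Fintype V] (hA : A.IsTree) (hcard : 3 ≤ Fintype.card V) :
    (innerVertices A).Nonempty := by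
  classical
  by_contra! hempty
  have hall (v : V) : vdeg A v = 1 := of_not_not (Set.eq_empty_iff_forall_notMem.1 hempty v)
  have hdeg (v : V) : A.degree v = 1 := by
    rw [← hall v, vdeg, Set.ncard_eq_toFinset_card']
    rfl
  have hsum := A.sum_degrees_eq_twice_card_edges
  have hedges := hA.card_edgeFinset
  simp only [hdeg, Finset.sum_const, Finset.card_univ, smul_eq_mul, mul_one] at hsum
  omega

theorem two_le_vdeg [Finite V] [Nontrivial V] (hA : A.Connected) (he : e ∈ innerVertices A) :
    2 ≤ vdeg A e := by
  obtain ⟨w, hw⟩ := hA.preconnected.exists_adj_of_nontrivial e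
  have := Set.ncard_ne_zero_of_mem (s := A.neighborSet e) hw
  have hne : (A.neighborSet e).ncard ≠ 1 := he
  unfold vdeg
  omega

theorem exists_leaf_adj [Finite V] [Nontrivial V] (hA : A.Connected) (he : e ∈ innerVertices A)
    (hend : (A.neighborSet e ∩ innerVertices A).ncard ≤ 1) :
    ∃ r, A.Adj r e ∧ vdeg A r = 1 := by
  by_contra! hnone
  have hinner : A.neighborSet e ⊆ innerVertices A := fun v hv => hnone v (Adj.symm hv)
  rw [Set.inter_eq_left.2 hinner] at hend
  exact absurd (two_le_vdeg hA he) (by unfold vdeg; omega)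

theorem neighborSet_eq_singleton_of_vdeg_eq_one (hr : vdeg A r = 1) (hre : A.Adj r e) :
    A.neighborSet r = {e} := by
  obtain ⟨w, hw⟩ := Set.ncard_eq_one.1 hr
  have he : e ∈ A.neighborSet r := hre
  rw [hw] at he ⊢
  rw [Set.mem_singleton_iff.1 he]

theorem ncard_neighborSet_inter_insert_le [Finite V] {S : Set V} (hr : A.neighborSet r = {e})
    (hend : (A.neighborSet e ∩ S).ncard ≤ 1)
    (hdeg : ∀ p ∈ S, (A.neighborSet p ∩ S).ncard ≤ 2) :
    ∀ p ∈ insert r S, (A.neighborSet p ∩ insert r S).ncard ≤ 2 := by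
  rintro p (rfl | hp)
  · rw [hr]
    exact (Set.ncard_inter_le_ncard_left _ _).trans (by simp)
  by_cases hpr : A.Adj p r
  · obtain rfl : p = e := by simpa [hr] using (A.mem_neighborSet r p).2 hpr.symm
    rw [Set.inter_insert_of_mem (show r ∈ A.neighborSet p from hpr)]
    exact (Set.ncard_insert_le _ _).trans (by omega)
  · rw [Set.inter_insert_of_notMem (show r ∉ A.neighborSet p from hpr)]
    exact hdeg p hp

/-- The spine of a caterpillar is rooted at a leaf next to one end of the path of inner vertices:
the root and all inner vertices form a path on which `depth` is the distance from the root, and all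
other vertices are leaves hanging off that path. -/
structure SpineRooting (A : SimpleGraph V) where
  root : V
  parent : V → V
  IsSpine : V → Prop
  depth : V → ℕ
  isSpine_root : IsSpine root
  depth_root : depth root = 0
  isSpine_parent : ∀ d, d ≠ root → IsSpine (parent d)
  depth_eq : ∀ d, d ≠ root → depth d = depth (parent d) + 1
  parent_ne_root : ∀ d, ¬ IsSpine d → parent d ≠ root
  depth_injOn : ∀ u v, IsSpine u → IsSpine v → depth u = depth v → u = v
  exists_eq_of_adj : ∀ a b, A.Adj a b → ∃ d, d ≠ root ∧ s(a, b) = s(parent d, d)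

theorem IsCaterpillar.ncard_inner_neighbors_le_two (hA : IsCaterpillar A) :
    ∀ v ∈ innerVertices A, (A.neighborSet v ∩ innerVertices A).ncard ≤ 2 := by
  intro v hv
  obtain ⟨-, hdeg, -⟩ := hA.2.resolve_left fun hempty => hempty.false ⟨v, hv⟩
  exact vdeg_induce (innerVertices A) ⟨v, hv⟩ ▸ hdeg ⟨v, hv⟩

theorem IsCaterpillar.exists_inner_ncard_le_one [Fintype V] (hA : IsCaterpillar A)
    (hcard : 3 ≤ Fintype.card V) :
    ∃ e ∈ innerVertices A, (A.neighborSet e ∩ innerVertices A).ncard ≤ 1 := by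
  obtain ⟨v, hv⟩ := nonempty_innerVertices hA.1 hcard
  obtain ⟨-, -, e, he⟩ := hA.2.resolve_left fun hempty => hempty.false ⟨v, hv⟩
  exact ⟨e, e.2, vdeg_induce (innerVertices A) e ▸ he⟩

theorem mem_insert_of_adj_of_dist_eq_succ [Finite V] {p d : V} (hA : A.Connected)
    (hpd : A.Adj p d) (hp : A.dist r d = A.dist r p + 1) :
    p ∈ insert r (innerVertices A) := by
  refine or_iff_not_imp_left.2 fun hpr => ?_
  obtain ⟨g, hgp, hg⟩ := exists_adj_dist_eq_succ hA hpr
  have hne : d ≠ g := by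
    rintro rfl
    omega
  exact ((Set.one_lt_ncard (Set.toFinite _)).2 ⟨d, hpd, g, hgp.symm, hne⟩).ne'

theorem IsCaterpillar.nonempty_spineRooting [Fintype V] (hA : IsCaterpillar A)
    (hcard : 3 ≤ Fintype.card V) : Nonempty (SpineRooting A) := by
  have hconn := hA.1.connected
  have : Nontrivial V := Fintype.one_lt_card_iff_nontrivial.1 (by omega)
  obtain ⟨e, he, hend⟩ := hA.exists_inner_ncard_le_one hcard
  obtain ⟨r, hre, hr⟩ := exists_leaf_adj hconn he hend
  have hNr := neighborSet_eq_singleton_of_vdeg_eq_one hr hre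
  have hspine (p d : V) := mem_insert_of_adj_of_dist_eq_succ (r := r) (p := p) (d := d) hconn
  choose! parent hadj hdist using fun d (hd : d ≠ r) => exists_adj_dist_eq_succ hconn hd
  refine ⟨⟨r, parent, (· ∈ insert r (innerVertices A)), A.dist r, Set.mem_insert _ _, dist_self,
    fun d hd => hspine _ d (hadj d hd) (hdist d hd), hdist, ?_, ?_, ?_⟩⟩
  · rintro d hd hroot
    have hdr : d ≠ r := fun h => hd (.inl h)
    have hde : d ∈ A.neighborSet r := hroot ▸ hadj d hdr
    rw [hNr, Set.mem_singleton_iff] at hde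
    exact hd (.inr (hde ▸ he))
  · intro u v hu hv
    exact injOn_dist_of_ncard_le hconn hspine
      (hNr ▸ (Set.ncard_inter_le_ncard_left _ _).trans (by simp))
      (ncard_neighborSet_inter_insert_le hNr hend hA.ncard_inner_neighbors_le_two) hu hv
  · have eq_parent (p d : V) (hpd : A.Adj p d) (hp : A.dist r d = A.dist r p + 1) :
        d ≠ r ∧ parent d = p := by
      have hd : d ≠ r := by
        rintro rfl
        simp at hp
      exact ⟨hd, eq_of_adj_of_dist_eq_succ hA.1 (hadj d hd) hpd (hdist d hd) hp⟩
    intro a b hab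
    rcases hA.1.dist_eq_dist_add_one_of_adj r hab with h | h
    · obtain ⟨ha, hpar⟩ := eq_parent b a hab.symm h
      exact ⟨a, ha, by rw [hpar, Sym2.eq_swap]⟩
    · obtain ⟨hb, hpar⟩ := eq_parent a b hab h
      exact ⟨b, hb, by rw [hpar]⟩

end Caterpillar

/-! ### From a rooted caterpillar and the columns to the rows -/

theorem exists_equiv_fin_lt_iff {α β : Type*} [Fintype α] [LinearOrder β] {f : α → β}
    (hf : Function.Injective f) :
    ∃ rank : α ≃ Fin (Fintype.card α), ∀ a b, rank a < rank b ↔ f a < f b := by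
  let : LinearOrder α := .lift' f hf
  exact ⟨(Fintype.orderIsoFinOfCardEq α rfl).symm,
    fun _ _ => (Fintype.orderIsoFinOfCardEq α rfl).symm.lt_iff_lt⟩

namespace SpineRooting

variable {V : Type} {A : SimpleGraph V} (T : SpineRooting A) (column : V → ℕ) {u v w c d : V}

/-- A vertex off the spine is special if its column is the one right after that of its parent. -/
def IsSpecial (d : V) : Prop :=
  ¬ T.IsSpine d ∧ column d = column (T.parent d) + 1

open Classical in
/-- The first criterion for ordering the rows: a spine vertex lies directly above its special child,
and is followed by its other children off the spine before the next spine vertex. -/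
noncomputable def level (v : V) : ℕ :=
  if T.IsSpine v then 3 * T.depth v + 1
  else if T.IsSpecial column v then 3 * T.depth (T.parent v)
  else 3 * T.depth (T.parent v) + 2

/-- The vertices are ordered from bottom to top by their level, with ties broken by columns. -/
noncomputable def rowKey (v : V) : ℕ ×ₗ ℕ := toLex (T.level column v, column v)

variable {column}

theorem ne_root_of_not_isSpine (hd : ¬ T.IsSpine d) : d ≠ T.root := by
  rintro rfl
  exact hd T.isSpine_root

theorem isSpine_parent_of_not_isSpine (hd : ¬ T.IsSpine d) : T.IsSpine (T.parent d) :=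
  T.isSpine_parent d (T.ne_root_of_not_isSpine hd)

theorem depth_parent_pos (hd : ¬ T.IsSpine d) : 0 < T.depth (T.parent d) := by
  rw [T.depth_eq _ (T.parent_ne_root d hd)]
  exact Nat.succ_pos _

theorem level_of_isSpine (hv : T.IsSpine v) : T.level column v = 3 * T.depth v + 1 :=
  if_pos hv

theorem level_of_isSpecial (hv : T.IsSpecial column v) :
    T.level column v = 3 * T.depth (T.parent v) := by
  rw [level, if_neg hv.1, if_pos hv]

theorem level_of_not_isSpecial (hv : ¬ T.IsSpine v) (hs : ¬ T.IsSpecial column v) :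
    T.level column v = 3 * T.depth (T.parent v) + 2 := by
  rw [level, if_neg hv, if_neg hs]

theorem level_root_le (v : V) : T.level column T.root ≤ T.level column v := by
  rw [T.level_of_isSpine T.isSpine_root, T.depth_root]
  unfold level
  split_ifs with hv
  · omega
  · have := T.depth_parent_pos hv
    omega
  · omega

theorem level_parent_lt (hd : d ≠ T.root) (hs : ¬ T.IsSpecial column d) :
    T.level column (T.parent d) < T.level column d := by
  rw [T.level_of_isSpine (T.isSpine_parent d hd)]
  by_cases hspine : T.IsSpine d
  · rw [T.level_of_isSpine hspine, T.depth_eq d hd]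
    omega
  · rw [T.level_of_not_isSpecial hspine hs]
    omega

theorem rowKey_lt_of_level_lt (h : T.level column u < T.level column v) :
    T.rowKey column u < T.rowKey column v :=
  Prod.Lex.toLex_lt_toLex.2 (.inl h)

theorem level_le_of_rowKey_lt (h : T.rowKey column u < T.rowKey column v) :
    T.level column u ≤ T.level column v := by
  by_contra! hlt
  exact (T.rowKey_lt_of_level_lt hlt).not_gt h

theorem rowKey_injective (hinj : Function.Injective column) :
    Function.Injective (T.rowKey column) := by
  intro u v huv
  exact hinj (congrArg Prod.snd (toLex.injective huv))

theorem rowKey_root_le (hroot : column T.root = 0) (v : V) :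
    T.rowKey column T.root ≤ T.rowKey column v := by
  refine Prod.Lex.toLex_le_toLex.2 ?_
  rcases (T.level_root_le v).lt_or_eq with hlt | heq
  · exact .inl hlt
  · exact .inr ⟨heq, hroot ▸ Nat.zero_le _⟩

theorem rowKey_le_of_special_of_lt_parent (hinj : Function.Injective column)
    (hc : T.IsSpecial column c) (hw : T.rowKey column w < T.rowKey column (T.parent c)) :
    T.rowKey column w ≤ T.rowKey column c := by
  by_contra! hcw
  have hparent := T.isSpine_parent_of_not_isSpine hc.1
  have hlow := T.level_le_of_rowKey_lt hcw
  have hhigh := T.level_le_of_rowKey_lt hw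
  rw [T.level_of_isSpecial hc] at hlow
  rw [T.level_of_isSpine hparent] at hhigh
  by_cases hspine : T.IsSpine w
  · rw [T.level_of_isSpine hspine] at hlow hhigh
    obtain rfl := T.depth_injOn w _ hspine hparent (by omega)
    exact hw.false
  by_cases hs : T.IsSpecial column w
  · rw [T.level_of_isSpecial hs] at hlow hhigh
    have hsame : T.parent w = T.parent c :=
      T.depth_injOn _ _ (T.isSpine_parent_of_not_isSpine hspine) hparent (by omega)
    obtain rfl : w = c := hinj (by rw [hs.2, hc.2, hsame])
    exact hcw.false
  · rw [T.level_of_not_isSpecial hspine hs] at hlow hhigh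
    omega

theorem rowKey_le_of_isSpine (hw : T.IsSpine w) (hd : d ≠ T.root)
    (hs : ¬ T.IsSpecial column d) (hlt : T.rowKey column (T.parent d) < T.rowKey column w) :
    T.rowKey column d ≤ T.rowKey column w := by
  by_contra! hwd
  have hparent := T.isSpine_parent d hd
  have hlow := T.level_le_of_rowKey_lt hlt
  have hhigh := T.level_le_of_rowKey_lt hwd
  have hne : T.depth w ≠ T.depth (T.parent d) := by
    intro h
    rw [T.depth_injOn w _ hw hparent h] at hlt
    exact hlt.false
  rw [T.level_of_isSpine hw] at hlow hhigh
  rw [T.level_of_isSpine hparent] at hlow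
  by_cases hspine : T.IsSpine d
  · rw [T.level_of_isSpine hspine, T.depth_eq d hd] at hhigh
    obtain rfl := T.depth_injOn w d hw hspine (by rw [T.depth_eq d hd]; omega)
    exact hwd.false
  · rw [T.level_of_not_isSpecial hspine hs] at hhigh
    omega

theorem level_le_of_not_isSpecial (hd : d ≠ T.root) (hs : ¬ T.IsSpecial column d) :
    T.level column d ≤ 3 * T.depth (T.parent d) + 4 := by
  by_cases hspine : T.IsSpine d
  · rw [T.level_of_isSpine hspine, T.depth_eq d hd]
    omega
  · rw [T.level_of_not_isSpecial hspine hs]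
    omega

theorem rowKey_le_of_column_eq (hinj : Function.Injective column) (hd : d ≠ T.root)
    (hs : ¬ T.IsSpecial column d) (hcol : column w = column (T.parent d) + 1)
    (hlt : T.rowKey column (T.parent d) < T.rowKey column w) :
    T.rowKey column d ≤ T.rowKey column w := by
  by_cases hspine : T.IsSpine w
  · exact T.rowKey_le_of_isSpine hspine hd hs hlt
  by_contra! hwd
  have hparent := T.isSpine_parent d hd
  have hlow := T.level_le_of_rowKey_lt hlt
  have hhigh := (T.level_le_of_rowKey_lt hwd).trans (T.level_le_of_not_isSpecial hd hs)
  rw [T.level_of_isSpine hparent] at hlow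
  by_cases hsw : T.IsSpecial column w
  · have hsame : T.parent w = T.parent d := hinj (by have := hsw.2; omega)
    rw [T.level_of_isSpecial hsw, hsame] at hlow
    omega
  · rw [T.level_of_not_isSpecial hspine hsw] at hlow hhigh
    have hsame : T.parent w = T.parent d :=
      T.depth_injOn _ _ (T.isSpine_parent_of_not_isSpine hspine) hparent (by omega)
    exact hsw ⟨hspine, hsame ▸ hcol⟩

theorem exists_row [Fintype V] (hinj : Function.Injective column) (hroot : column T.root = 0) :
    ∃ row : V ≃ Fin (Fintype.card V),
      (∀ u v, row u < row v ↔ T.rowKey column u < T.rowKey column v) ∧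
      (row T.root : ℕ) = 0 ∧
      ∀ c, T.IsSpecial column c → (row (T.parent c) : ℕ) = row c + 1 := by
  obtain ⟨row, hrow⟩ := exists_equiv_fin_lt_iff (T.rowKey_injective hinj)
  refine ⟨row, hrow, ?_, fun c hc => ?_⟩
  · by_contra hpos
    let bottom := row.symm ⟨0, (Nat.zero_le _).trans_lt (row T.root).2⟩
    have hlt : row bottom < row T.root := by
      rw [Equiv.apply_symm_apply, Fin.lt_def]
      exact Nat.pos_of_ne_zero hpos
    exact ((hrow _ _).1 hlt).not_ge (T.rowKey_root_le hroot bottom)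
  · have hlt : row c < row (T.parent c) := (hrow _ _).2 <| T.rowKey_lt_of_level_lt <| by
      rw [T.level_of_isSpecial hc, T.level_of_isSpine (T.isSpine_parent_of_not_isSpine hc.1)]
      exact Nat.lt_succ_self _
    rw [Fin.lt_def] at hlt
    by_contra hne
    let above := row.symm ⟨row c + 1, by omega⟩
    have habove : (row above : ℕ) = row c + 1 := by simp [above]
    have hle := T.rowKey_le_of_special_of_lt_parent hinj hc
      ((hrow above _).1 (Fin.lt_def.2 (by omega)))
    exact ((hrow c above).1 (Fin.lt_def.2 (by omega))).not_ge hle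

theorem exists_racLayout [Fintype V] (hlt : ∀ v, column v < Fintype.card V)
    (hinj : Function.Injective column) (hroot : column T.root = 0) :
    ∃ L : RacLayout V (Fintype.card V),
      L.column = column ∧ L.root = T.root ∧ L.parent = T.parent := by
  obtain ⟨row, hrow, hrow_root, hrow_special⟩ := T.exists_row hinj hroot
  have row_le {u v : V} (h : T.rowKey column u ≤ T.rowKey column v) : row u ≤ row v :=
    not_lt.1 fun hvu => h.not_gt ((hrow v u).1 hvu)
  exact ⟨{
    column := column
    row := fun v => row v
    root := T.root
    parent := T.parent
    IsSpecial := T.IsSpecial column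
    column_lt := hlt
    row_lt := fun v => (row v).2
    column_injective := hinj
    row_injective := Fin.val_injective.comp row.injective
    column_root := hroot
    row_root := hrow_root
    root_not_special := fun h => h.1 T.isSpine_root
    parent_not_special := fun d hd h => h.1 (T.isSpine_parent d hd)
    column_of_special := fun _ h => h.2
    row_parent_of_special := hrow_special
    row_parent_lt := fun d hd hs =>
      (hrow _ _).2 (T.rowKey_lt_of_level_lt (T.level_parent_lt hd hs))
    parent_not_between := fun c d hc hd hs h =>
      row_le (T.rowKey_le_of_isSpine (T.isSpine_parent c hc) hd hs ((hrow _ _).1 h))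
    next_not_between := fun w d hd hs hcol h =>
      row_le (T.rowKey_le_of_column_eq hinj hd hs hcol ((hrow _ _).1 h)) }, rfl, rfl, rfl⟩

end SpineRooting

/-- A caterpillar and a spanning cycle on a common set of `n ≥ 3` vertices admit a
RacSim drawing on an integer grid of size `(2n - 1) × 2n` with at most one bend per
edge. -/
theorem racsim_caterpillar_cycle {V : Type} [Fintype V] (n : ℕ)
    (hcard : Fintype.card V = n) (hn : 3 ≤ n) (A C : SimpleGraph V)
    (hA : IsCaterpillar A) (hC : IsSpanningCycle C) :
    ∃ D : SimDrawing ![A, C], D.IsRacSim ∧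
      D.OnGrid (2 * (n : ℤ) - 1) (2 * (n : ℤ)) ∧
      ∀ i : Fin 2, D.BendsAtMost i 1 := by
  subst hcard
  obtain ⟨T⟩ := hA.nonempty_spineRooting hn
  obtain ⟨column, hlt, hinj, hroot, hadj⟩ := hC.exists_column T.root
  obtain ⟨L, rfl, hLroot, hLparent⟩ := T.exists_racLayout hlt hinj hroot
  refine L.exists_racSim (hLroot ▸ hLparent ▸ T.exists_eq_of_adj) fun a b hab => ?_
  obtain ⟨v, w, harc, heq⟩ := hadj a b hab
  exact ⟨v, w, by rwa [RacLayout.IsCycleArc, hLroot], heq⟩
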